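/- Let p > 3 be a prime. (i) If k ∈ F_p is a nonsquare and 12 divides p + 1, then P(x) = x³ − kx is not a Sidon polynomial over F_p × F_p. (ii) If 12 does not divide p − 1, then P(x) = x³ − x is not a Sidon polynomial over F_p × F_p. -/

import Mathlib

open Polynomial

/-- A subset `A` of an abelian group is a Sidon set if whenever
`a₁ - a₂ = a₃ - a₄` with all four elements in `A`, then `{a₁, a₄} = {a₂, a₃}`. -/
def IsSidon {G : Type*} [AddCommGroup G] (A : Set G) : Prop :=
  ∀ a₁ ∈ A, ∀ a₂ ∈ A, ∀ a₃ ∈ A, ∀ a₄ ∈ A,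
    a₁ - a₂ = a₃ - a₄ → ({a₁, a₄} : Set G) = {a₂, a₃}

/-- The set `(P,Q) = {(P(x), Q(x)) : x ∈ F}`. -/
def polyGraph {F : Type*} [Field F] (P Q : F[X]) : Set (F × F) :=
  Set.range fun x : F => (P.eval x, Q.eval x)

/-- A maximum Sidon set over `F × F`: a Sidon set with exactly `|F|` elements. -/
def IsMaxSidon {F : Type*} [Field F] [Fintype F] (A : Set (F × F)) : Prop :=
  IsSidon A ∧ A.ncard = Fintype.card F

/-- A polynomial `P` is Sidon if there is `Q` with `(P,Q)` a maximum Sidon set. -/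
def IsSidonPoly {F : Type*} [Field F] [Fintype F] (P : F[X]) : Prop :=
  ∃ Q : F[X], IsMaxSidon (polyGraph P Q)

/-- A permutation polynomial: its evaluation map is a bijection of `F`. -/
def IsPermPoly {F : Type*} [Field F] (R : F[X]) : Prop :=
  Function.Bijective fun x : F => R.eval x

/-- Sidon equivalence: `P' = R ∘ P ∘ T` (as functions on `F`)
for permutation polynomials `R`, `T`. -/
def SidonEquiv {F : Type*} [Field F] (P P' : F[X]) : Prop :=
  ∃ R T : F[X], IsPermPoly R ∧ IsPermPoly T ∧
    ∀ x : F, P'.eval x = R.eval (P.eval (T.eval x))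

/-!
Let `q = |F|`, and let `A ⊆ F × F` be a Sidon set with `q` elements. Its `q² - q` differences of
distinct elements are distinct, so exactly `q` elements of `F × F` are missed. The power sums of
their first coordinates are, up to sign, those of the differences `a.1 - b.1` with `a, b ∈ A`, and
the binomial theorem computes the latter from the power sums `∑ a ∈ A, a.1 ^ i`. If the first of
these that does not vanish has exponent `e`, and `(2 * e).choose e ≠ 0` in `F`, then the first one
that does not vanish for the missed elements has exponent `2 * e`.

The number of missed elements above `h` is, read in `F` and up to sign, the value at `h` of a
polynomial whose coefficients are these power sums, of degree `q - 1 - 2 * e`. When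
`2 * e < q - 1 ≤ 3 * e`, at most `(q - 1) / 3` fibres are therefore empty and at most
`(q - 1) / 3` are singletons, so at least `2 * q - 3 * ((q - 1) / 3) > q` elements are missed, a
contradiction. For `A = (P, Q)` with `P = x³ - kx` and `F = ZMod p`, the exponent `e` is
`(p - 1) / 3` or `(p + 1) / 3`, which is in range unless `p = 5`. There a nonzero square `k` gives
`P` three zeros, hence six differences over `0` where the Sidon property leaves room for four.
-/

open Finset

section FiberCount

variable {ι F : Type*} [Field F] [Fintype F]

theorem sum_pow_mul_pow_card_sub_one_sub [DecidableEq F] (x y : F) :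
    ∑ j ∈ range (Fintype.card F), x ^ j * y ^ (Fintype.card F - 1 - j) =
      if x = y then 0 else 1 := by
  split_ifs with hxy
  · rw [hxy, geom_sum₂_self, Nat.cast_card_eq_zero, zero_mul]
  · refine mul_right_cancel₀ (sub_ne_zero.2 hxy) ?_
    rw [(Commute.all x y).geom_sum₂_mul, FiniteField.pow_card, FiniteField.pow_card, one_mul]

/-- The polynomial whose coefficients are the power sums of `g` over `s`, in reverse order. Its
value at `h` is the number of `i ∈ s` with `g i ≠ h`, read in `F`, and so records the sizes of the
fibers of `g` modulo the characteristic. -/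
noncomputable def powerSumPoly (s : Finset ι) (g : ι → F) : F[X] :=
  ∑ j ∈ range (Fintype.card F), C (∑ i ∈ s, g i ^ (Fintype.card F - 1 - j)) * X ^ j

theorem eval_powerSumPoly [DecidableEq F] (s : Finset ι) (g : ι → F) (h : F) :
    (powerSumPoly s g).eval h = #s - #{i ∈ s | g i = h} := by
  calc (powerSumPoly s g).eval h
      = ∑ i ∈ s, ∑ j ∈ range (Fintype.card F), h ^ j * g i ^ (Fintype.card F - 1 - j) := by
        simp only [powerSumPoly, eval_finsetSum, eval_mul, eval_C, eval_pow, eval_X, sum_mul]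
        rw [sum_comm]
        simp only [mul_comm]
    _ = ∑ i ∈ s, (1 - if g i = h then 1 else 0) := by
        refine sum_congr rfl fun i _ => ?_
        rw [sum_pow_mul_pow_card_sub_one_sub]
        simp only [eq_comm (a := h)]
        split_ifs <;> simp
    _ = #s - #{i ∈ s | g i = h} := by simp

theorem coeff_powerSumPoly (s : Finset ι) (g : ι → F) {j : ℕ} (hj : j < Fintype.card F) :
    (powerSumPoly s g).coeff j = ∑ i ∈ s, g i ^ (Fintype.card F - 1 - j) := by
  simp only [powerSumPoly, finsetSum_coeff, coeff_C_mul_X_pow]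
  rw [sum_ite_eq, if_pos (mem_range.2 hj)]

theorem natDegree_powerSumPoly_lt (s : Finset ι) (g : ι → F) :
    (powerSumPoly s g).natDegree < Fintype.card F := by
  rw [← Nat.le_sub_one_iff_lt Fintype.card_pos]
  refine natDegree_sum_le_of_forall_le _ _ fun j hj => ?_
  exact (natDegree_C_mul_X_pow_le _ _).trans (Nat.le_sub_one_of_lt (mem_range.1 hj))

variable {s : Finset ι} {g : ι → F} {m : ℕ}

theorem natDegree_powerSumPoly (hm : m < Fintype.card F) (hlt : ∀ n < m, ∑ i ∈ s, g i ^ n = 0)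
    (hne : ∑ i ∈ s, g i ^ m ≠ 0) :
    (powerSumPoly s g).natDegree = Fintype.card F - 1 - m := by
  refine natDegree_eq_of_le_of_coeff_ne_zero (natDegree_le_iff_coeff_eq_zero.2 fun j hj => ?_) ?_
  · rcases lt_or_ge j (Fintype.card F) with hjq | hjq
    · rw [coeff_powerSumPoly s g hjq, hlt _ (by omega)]
    · exact coeff_eq_zero_of_natDegree_lt ((natDegree_powerSumPoly_lt s g).trans_le hjq)
  · rw [coeff_powerSumPoly s g (by omega), Nat.sub_sub_self (by omega)]
    exact hne

theorem card_filter_card_fiber_eq_le [DecidableEq F] (hm : m < Fintype.card F - 1)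
    (hlt : ∀ n < m, ∑ i ∈ s, g i ^ n = 0) (hne : ∑ i ∈ s, g i ^ m ≠ 0) (c : ℕ) :
    #{h : F | #{i ∈ s | g i = h} = c} ≤ Fintype.card F - 1 - m := by
  have hdeg := natDegree_powerSumPoly (by omega) hlt hne
  have hpos : 0 < (powerSumPoly s g).natDegree := by omega
  rw [← hdeg, ← natDegree_sub_C (a := (#s - c : F))]
  refine card_le_degree_of_subset_roots fun h hh => ?_
  rw [mem_val, mem_filter_univ] at hh
  rw [mem_roots (ne_zero_of_natDegree_gt (by rwa [natDegree_sub_C])), IsRoot, eval_sub, eval_C,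
    eval_powerSumPoly, hh, sub_self]

theorem two_mul_card_le_of_sum_pow_ne_zero (hm : m < Fintype.card F - 1)
    (hlt : ∀ n < m, ∑ i ∈ s, g i ^ n = 0) (hne : ∑ i ∈ s, g i ^ m ≠ 0) :
    2 * Fintype.card F ≤ #s + 3 * (Fintype.card F - 1 - m) := by
  classical
  have hpointwise : ∀ c : ℕ, 2 ≤ c + 2 * (if c = 0 then 1 else 0) + if c = 1 then 1 else 0 := by
    intro c
    split_ifs <;> omega
  have hsum := sum_le_sum fun (h : F) (_ : h ∈ univ) => hpointwise #{i ∈ s | g i = h}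
  simp only [sum_add_distrib, ← mul_sum, ← card_filter, sum_const, card_univ, smul_eq_mul,
    ← card_eq_sum_card_fiberwise (s := s) (f := g) (t := univ) (by simp)] at hsum
  have hempty := card_filter_card_fiber_eq_le hm hlt hne 0
  have hsingle := card_filter_card_fiber_eq_le hm hlt hne 1
  omega

end FiberCount

section SumSubPow

variable {ι R : Type*} [CommRing R] {s : Finset ι} {f : ι → R} {e : ℕ}

theorem sum_product_sub_pow (s : Finset ι) (f : ι → R) (n : ℕ) :
    ∑ z ∈ s ×ˢ s, (f z.1 - f z.2) ^ n =
      ∑ i ∈ range (n + 1),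
        (-1) ^ (n - i) * (n.choose i : R) * (∑ x ∈ s, f x ^ i) * ∑ x ∈ s, f x ^ (n - i) := by
  simp_rw [sub_eq_add_neg, add_pow]
  rw [sum_comm]
  refine sum_congr rfl fun i _ => ?_
  rw [mul_assoc, sum_mul_sum, ← sum_product', mul_sum]
  refine sum_congr rfl fun z _ => ?_
  rw [neg_pow]
  ring

theorem sum_product_sub_pow_eq_zero (hlt : ∀ i < e, ∑ x ∈ s, f x ^ i = 0) {n : ℕ}
    (hn : n < 2 * e) : ∑ z ∈ s ×ˢ s, (f z.1 - f z.2) ^ n = 0 := by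
  rw [sum_product_sub_pow]
  refine sum_eq_zero fun i _ => ?_
  rcases lt_or_ge i e with hi | hi
  · rw [hlt i hi, mul_zero, zero_mul]
  · rw [hlt (n - i) (by omega), mul_zero]

theorem sum_product_sub_pow_two_mul (hlt : ∀ i < e, ∑ x ∈ s, f x ^ i = 0) :
    ∑ z ∈ s ×ˢ s, (f z.1 - f z.2) ^ (2 * e) =
      (-1) ^ e * ((2 * e).choose e : R) * (∑ x ∈ s, f x ^ e) ^ 2 := by
  rw [sum_product_sub_pow, sum_eq_single_of_mem e (mem_range.2 (by omega)),
    show 2 * e - e = e by omega, sq, ← mul_assoc]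
  intro i hi hie
  rw [mem_range] at hi
  rcases lt_or_gt_of_ne hie with hlt_e | hgt_e
  · rw [hlt i hlt_e, mul_zero, zero_mul]
  · rw [hlt (2 * e - i) (by omega), mul_zero]

end SumSubPow

section Sidon

variable {G : Type*} [AddCommGroup G]

theorem IsSidon.injOn_sub {A : Set G} (hA : IsSidon A) :
    Set.InjOn (fun z : G × G => z.1 - z.2) A.offDiag := by
  rintro ⟨a, b⟩ ⟨ha, hb, hab⟩ ⟨c, d⟩ ⟨hc, hd, -⟩ (heq : a - b = c - d)
  have hmem : a ∈ ({b, c} : Set G) := hA a ha b hb c hc d hd heq ▸ Set.mem_insert a {d}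
  obtain rfl : a = c := hmem.resolve_left hab
  rw [sub_right_inj.1 heq]

/-- The elements of a finite group that are not a difference of two distinct elements of `A`.
In particular `0` is one of them. -/
def nonDifferences [Fintype G] [DecidableEq G] (A : Finset G) : Finset G :=
  (A.offDiag.image fun z => z.1 - z.2)ᶜ

theorem IsSidon.sum_nonDifferences_add_sum_offDiag [Fintype G] [DecidableEq G] {A : Finset G}
    (hA : IsSidon (A : Set G)) {M : Type*} [AddCommMonoid M] (φ : G → M) :
    ∑ w ∈ nonDifferences A, φ w + ∑ z ∈ A.offDiag, φ (z.1 - z.2) = ∑ w, φ w := by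
  have hinj : Set.InjOn (fun z : G × G => z.1 - z.2) A.offDiag := by
    rw [coe_offDiag]
    exact hA.injOn_sub
  rw [← sum_image (f := φ) hinj, nonDifferences, sum_compl_add_sum]

theorem IsSidon.card_offDiag_fiber_lt {K : Type*} [AddCommGroup K] [Fintype K] [DecidableEq G]
    {A : Finset (G × K)} (hA : IsSidon (A : Set (G × K))) (c : G) :
    #{a ∈ A | a.1 = c}.offDiag < Fintype.card K := by
  classical
  rw [← card_univ, ← card_erase_add_one (mem_univ (0 : K)), Nat.lt_succ_iff]
  refine card_le_card_of_injOn (fun z => z.1.2 - z.2.2) ?_ ?_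
  · intro z hz
    simp only [mem_coe, mem_offDiag, mem_filter] at hz
    have hfst : z.1.1 = z.2.1 := hz.1.2.trans hz.2.1.2.symm
    simpa [sub_eq_zero] using fun hsnd => hz.2.2 (Prod.ext hfst hsnd)
  · intro z hz w hw hzw
    simp only [mem_coe, mem_offDiag, mem_filter] at hz hw
    refine hA.injOn_sub ⟨hz.1.1, hz.2.1.1, hz.2.2⟩ ⟨hw.1.1, hw.2.1.1, hw.2.2⟩ (Prod.ext ?_ hzw)
    simp [hz.1.2, hz.2.1.2, hw.1.2, hw.2.1.2]

end Sidon

section MaxSidon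

variable {F : Type*} [Field F] [Fintype F] {P : F[X]} {A : Finset (F × F)}

theorem IsSidon.card_nonDifferences [DecidableEq F] (hA : IsSidon (A : Set (F × F)))
    (hcard : #A = Fintype.card F) : #(nonDifferences A) = Fintype.card F := by
  have h := hA.sum_nonDifferences_add_sum_offDiag fun _ => 1
  simp only [sum_const, smul_eq_mul, mul_one, offDiag_card, hcard, card_univ,
    Fintype.card_prod] at h
  have := Nat.le_mul_self (Fintype.card F)
  omega

theorem IsSidon.sum_nonDifferences_fst_pow [DecidableEq F] (hA : IsSidon (A : Set (F × F)))
    (hcard : #A = Fintype.card F) (n : ℕ) :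
    ∑ w ∈ nonDifferences A, w.1 ^ n = -∑ z ∈ A ×ˢ A, (z.1.1 - z.2.1) ^ n := by
  have hdiag : ∑ z ∈ A.diag, (z.1.1 - z.2.1) ^ n = 0 := by
    simp [sum_diag, hcard]
  have huniv : ∑ w : F × F, w.1 ^ n = 0 := by
    simp [Fintype.sum_prod_type]
  have h := hA.sum_nonDifferences_add_sum_offDiag fun w => w.1 ^ n
  rw [huniv] at h
  rw [← diag_union_offDiag, sum_union (disjoint_diag_offDiag A), hdiag, zero_add]
  exact eq_neg_of_add_eq_zero_left h

theorem IsSidon.sum_fst_pow_eq_zero (hA : IsSidon (A : Set (F × F)))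
    (hcard : #A = Fintype.card F) {e : ℕ} (he : 2 * e < Fintype.card F - 1)
    (he' : Fintype.card F - 1 ≤ 3 * e) (hchoose : ((2 * e).choose e : F) ≠ 0)
    (hlt : ∀ i < e, ∑ a ∈ A, a.1 ^ i = 0) : ∑ a ∈ A, a.1 ^ e = 0 := by
  classical
  by_contra hne
  have hvanish : ∀ n < 2 * e, ∑ w ∈ nonDifferences A, w.1 ^ n = 0 := fun n hn => by
    rw [hA.sum_nonDifferences_fst_pow hcard, sum_product_sub_pow_eq_zero hlt hn, neg_zero]
  have hfirst : ∑ w ∈ nonDifferences A, w.1 ^ (2 * e) ≠ 0 := by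
    rw [hA.sum_nonDifferences_fst_pow hcard, sum_product_sub_pow_two_mul hlt]
    simp [hchoose, hne]
  have hcount := two_mul_card_le_of_sum_pow_ne_zero he hvanish hfirst
  rw [hA.card_nonDifferences hcard] at hcount
  omega

theorem IsMaxSidon.injective {Q : F[X]} (hPQ : IsMaxSidon (polyGraph P Q)) :
    Function.Injective fun x : F => (P.eval x, Q.eval x) := by
  have hcard := hPQ.2
  rw [polyGraph, ← Set.image_univ, ← Nat.card_eq_fintype_card, ← Set.ncard_univ,
    Set.ncard_image_iff] at hcard
  exact Set.injOn_univ.1 hcard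

theorem IsSidonPoly.exists_embedding (hP : IsSidonPoly P) :
    ∃ φ : F ↪ F × F, (∀ x, (φ x).1 = P.eval x) ∧ IsSidon (univ.map φ : Set (F × F)) := by
  obtain ⟨Q, hPQ⟩ := hP
  refine ⟨⟨_, hPQ.injective⟩, fun _ => rfl, ?_⟩
  rw [coe_map, coe_univ, Set.image_univ]
  exact hPQ.1

theorem IsSidonPoly.sum_eval_pow_eq_zero (hP : IsSidonPoly P) {e : ℕ}
    (he : 2 * e < Fintype.card F - 1) (he' : Fintype.card F - 1 ≤ 3 * e)
    (hchoose : ((2 * e).choose e : F) ≠ 0) (hlt : ∀ i < e, ∑ x, P.eval x ^ i = 0) :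
    ∑ x, P.eval x ^ e = 0 := by
  obtain ⟨φ, hφ, hA⟩ := hP.exists_embedding
  have hsum (i : ℕ) : ∑ a ∈ univ.map φ, a.1 ^ i = ∑ x, P.eval x ^ i := by
    simp only [sum_map, hφ]
  simp only [← hsum] at hlt ⊢
  exact hA.sum_fst_pow_eq_zero (card_map φ) he he' hchoose hlt

theorem IsSidonPoly.card_offDiag_lt (hP : IsSidonPoly P) {s : Finset F} {c : F}
    (hs : ∀ x ∈ s, P.eval x = c) : #s.offDiag < Fintype.card F := by
  classical
  obtain ⟨φ, hφ, hA⟩ := hP.exists_embedding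
  have hsub : s.map φ ⊆ {a ∈ univ.map φ | a.1 = c} := by
    intro a ha
    obtain ⟨x, hx, rfl⟩ := mem_map.1 ha
    simp [hφ, hs x hx]
  calc #s.offDiag = #(s.map φ).offDiag := by rw [offDiag_card, offDiag_card, card_map]
    _ ≤ #{a ∈ univ.map φ | a.1 = c}.offDiag := card_le_card (offDiag_mono hsub)
    _ < Fintype.card F := hA.card_offDiag_fiber_lt c

end MaxSidon

section SumEval

variable {F : Type*} [Field F] [Fintype F]

theorem sum_pow_of_lt_two_mul_card_sub_one {i : ℕ} (hi : i < 2 * (Fintype.card F - 1)) :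
    ∑ x : F, x ^ i = if i = Fintype.card F - 1 then -1 else 0 := by
  classical
  have hq := Fintype.one_lt_card (α := F)
  rcases lt_trichotomy i (Fintype.card F - 1) with hlt | rfl | hgt
  · rw [FiniteField.sum_pow_lt_card_sub_one F i hlt, if_neg hlt.ne]
  · have hpow (x : F) : x ^ (Fintype.card F - 1) = 1 - if x = 0 then 1 else 0 := by
      split_ifs with hx
      · rw [hx, zero_pow (by omega), sub_self]
      · rw [FiniteField.pow_card_sub_one_eq_one x hx, sub_zero]
    simp [hpow]
  · obtain ⟨r, rfl⟩ := Nat.exists_eq_add_of_le hgt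
    have hpow (x : F) : x ^ ((Fintype.card F - 1).succ + r) = x ^ (r + 1) := by
      rw [Nat.succ_eq_add_one, Nat.sub_add_cancel hq.le, pow_add, FiniteField.pow_card, pow_succ']
    rw [if_neg (by omega), ← FiniteField.sum_pow_lt_card_sub_one F (r + 1) (by omega)]
    exact sum_congr rfl fun x _ => hpow x

theorem sum_eval_eq_neg_coeff {f : F[X]} (hf : f.natDegree < 2 * (Fintype.card F - 1)) :
    ∑ x, f.eval x = -f.coeff (Fintype.card F - 1) := by
  have hmem : Fintype.card F - 1 ∈ range (2 * (Fintype.card F - 1)) := by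
    have := Fintype.one_lt_card (α := F)
    rw [mem_range]
    omega
  calc ∑ x, f.eval x
      = ∑ i ∈ range (2 * (Fintype.card F - 1)), f.coeff i * ∑ x : F, x ^ i := by
        simp_rw [eval_eq_sum_range' hf, mul_sum]
        exact sum_comm
    _ = ∑ i ∈ range (2 * (Fintype.card F - 1)),
          f.coeff i * if i = Fintype.card F - 1 then -1 else 0 :=
        sum_congr rfl fun i hi => by rw [sum_pow_of_lt_two_mul_card_sub_one (mem_range.1 hi)]
    _ = -f.coeff (Fintype.card F - 1) := by simp [hmem, -mem_range]

end SumEval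

section Cubic

theorem coeff_cubic_pow {R : Type*} [CommRing R] (k : R) (n j : ℕ) :
    ((X ^ 3 - C k * X) ^ n).coeff (n + 2 * j) = (-k) ^ (n - j) * (n.choose j : R) := by
  have hfactor : (X ^ 3 - C k * X) ^ n = X ^ n * expand R 2 ((X + C (-k)) ^ n) := by
    simp only [map_pow, map_add, expand_X, expand_C, ← mul_pow]
    rw [C_neg]
    ring
  rw [hfactor, add_comm n, coeff_X_pow_mul, coeff_expand_mul' two_pos, coeff_X_add_C_pow]

theorem natDegree_cubic_pow_le {R : Type*} [CommRing R] (k : R) (n : ℕ) :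
    ((X ^ 3 - C k * X) ^ n).natDegree ≤ n * 3 :=
  natDegree_pow_le_of_le n (by compute_degree)

section FiniteField

variable {F : Type*} [Field F] [Fintype F]

theorem sum_cubic_pow_eq_zero (k : F) {n : ℕ} (hn : 3 * n < Fintype.card F - 1) :
    ∑ x, (X ^ 3 - C k * X).eval x ^ n = 0 := by
  have hdeg := natDegree_cubic_pow_le k n
  simp_rw [← eval_pow]
  rw [sum_eval_eq_neg_coeff (by omega), coeff_eq_zero_of_natDegree_lt (by omega), neg_zero]

theorem sum_cubic_pow_of_three_mul_eq (k : F) {n : ℕ} (hn : 3 * n = Fintype.card F - 1) :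
    ∑ x, (X ^ 3 - C k * X).eval x ^ n = -1 := by
  have hq := Fintype.one_lt_card (α := F)
  have hdeg := natDegree_cubic_pow_le k n
  simp_rw [← eval_pow]
  rw [sum_eval_eq_neg_coeff (by omega), show Fintype.card F - 1 = n + 2 * n by omega,
    coeff_cubic_pow]
  simp

theorem sum_cubic_pow_of_three_mul_eq_add_two (hq : 3 < Fintype.card F) (k : F) {n : ℕ}
    (hn : 3 * n = Fintype.card F - 1 + 2) :
    ∑ x, (X ^ 3 - C k * X).eval x ^ n = n * k := by
  obtain ⟨r, rfl⟩ : ∃ r, n = r + 1 := ⟨n - 1, by omega⟩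
  have hdeg := natDegree_cubic_pow_le k (r + 1)
  simp_rw [← eval_pow]
  rw [sum_eval_eq_neg_coeff (by omega), show Fintype.card F - 1 = r + 1 + 2 * r by omega,
    coeff_cubic_pow]
  simp [mul_comm]

theorem not_isSidonPoly_cubic_of_isSquare (hq : Fintype.card F ≤ 6) (hchar : ringChar F ≠ 2)
    {k : F} (hk : k ≠ 0) (hsq : IsSquare k) : ¬ IsSidonPoly (X ^ 3 - C k * X) := by
  classical
  obtain ⟨y, rfl⟩ := hsq
  have hy : y ≠ 0 := left_ne_zero_of_mul hk
  have hyy : y ≠ -y := fun h =>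
    hy ((Ring.eq_self_iff_eq_zero_of_char_ne_two hchar).1 h.symm)
  have hfactor (x : F) : (X ^ 3 - C (y * y) * X).eval x = x * (x - y) * (x + y) := by
    simp only [eval_sub, eval_mul, eval_pow, eval_X, eval_C]
    ring
  have hzeros : ∀ x ∈ ({0, y, -y} : Finset F), (X ^ 3 - C (y * y) * X).eval x = 0 := by
    intro x hx
    rw [hfactor]
    simp only [mem_insert, mem_singleton] at hx
    rcases hx with hx | hx | hx <;> simp [hx]
  intro hP
  have hlt := hP.card_offDiag_lt hzeros
  have hthree : #{0, y, -y} = 3 := card_eq_three.2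
    ⟨0, y, -y, hy.symm, (neg_ne_zero.2 hy).symm, hyy, rfl⟩
  rw [offDiag_card, hthree] at hlt
  omega

end FiniteField

variable {p : ℕ} [Fact p.Prime]

theorem natCast_choose_ne_zero {n i : ℕ} (hn : n < p) (hi : i ≤ n) :
    (n.choose i : ZMod p) ≠ 0 := by
  rw [Ne, ZMod.natCast_eq_zero_iff, ← (Fact.out : p.Prime).coprime_iff_not_dvd]
  exact (Fact.out : p.Prime).coprime_choose_of_lt hn hi

theorem not_isSidonPoly_cubic_of_five_lt (hp : 5 < p) {k : ZMod p} (hk : k ≠ 0) :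
    ¬ IsSidonPoly (X ^ 3 - C k * X) := by
  intro hP
  have hprime : p.Prime := Fact.out
  have hmod2 : p % 2 = 1 := hprime.eq_two_or_odd.resolve_left (by omega)
  have hmod3 : p % 3 = 1 ∨ p % 3 = 2 := by
    have hdvd : ¬ 3 ∣ p := fun h =>
      absurd ((Nat.prime_dvd_prime_iff_eq Nat.prime_three hprime).1 h) (by omega)
    omega
  have hcard := ZMod.card p
  have hsum {e : ℕ} (he : 2 * e < p - 1) (he' : p - 1 ≤ 3 * e) (he'' : 3 * e ≤ p + 1) :
      ∑ x, (X ^ 3 - C k * X).eval x ^ e = 0 :=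
    hP.sum_eval_pow_eq_zero (by omega) (by omega) (natCast_choose_ne_zero (by omega) (by omega))
      fun i hi => sum_cubic_pow_eq_zero k (by omega)
  rcases hmod3 with hmod3 | hmod3
  · have hpow := sum_cubic_pow_of_three_mul_eq k (n := (p - 1) / 3) (by omega)
    rw [hsum (by omega) (by omega) (by omega)] at hpow
    simp at hpow
  · have hpow := sum_cubic_pow_of_three_mul_eq_add_two (by omega) k (n := (p + 1) / 3) (by omega)
    rw [hsum (by omega) (by omega) (by omega)] at hpow
    have hcast : (((p + 1) / 3 : ℕ) : ZMod p) ≠ 0 := by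
      rw [Ne, ZMod.natCast_eq_zero_iff]
      exact Nat.not_dvd_of_pos_of_lt (by omega) (by omega)
    exact mul_ne_zero hcast hk hpow.symm

end Cubic

theorem stmt_17_general {p : ℕ} [Fact p.Prime] (hp : 3 < p) {k : ZMod p} (hk : k ≠ 0)
    (hfive : p = 5 → IsSquare k) : ¬ IsSidonPoly (X ^ 3 - C k * X) := by
  rcases Nat.lt_or_ge 5 p with hlt | hle
  · exact not_isSidonPoly_cubic_of_five_lt hlt hk
  · obtain rfl : p = 5 := by
      have hmod2 := (Fact.out : p.Prime).eq_two_or_odd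
      omega
    have hchar : ringChar (ZMod 5) ≠ 2 := by simp [ZMod.ringChar_zmod_n]
    exact not_isSidonPoly_cubic_of_isSquare (by simp [ZMod.card]) hchar hk (hfive rfl)

/-- for a prime `p > 3`: (i) if `k` is a nonsquare and `12 ∣ p + 1`,
then `x³ - kx` is not Sidon; (ii) if `12 ∤ p - 1`, then `x³ - x` is not Sidon. -/
theorem stmt_17 (p : ℕ) [Fact p.Prime] (hp : 3 < p) :
    (∀ k : ZMod p, (¬ ∃ y : ZMod p, y ^ 2 = k) → 12 ∣ p + 1 →
      ¬ IsSidonPoly ((X : (ZMod p)[X]) ^ 3 - C k * X)) ∧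
    (¬ 12 ∣ p - 1 → ¬ IsSidonPoly ((X : (ZMod p)[X]) ^ 3 - X)) := by
  refine ⟨fun k hk h12 => stmt_17_general hp ?_ (by omega), fun _ => ?_⟩
  · rintro rfl
    exact hk ⟨0, by simp⟩
  · simpa using stmt_17_general hp one_ne_zero fun _ => IsSquare.one
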